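/- Let p be a prime and n ≥ 2 an integer not divisible by p. For each integer i with 1 ≤ i ≤ n−1 and p ∤ i, let α_i be the unique positive integer satisfying i·p^{α_i − 1} < n < i·p^{α_i}. Then ∑ α_i = n − 1, where the sum runs over all i with 1 ≤ i ≤ n−1 and gcd(i, p) = 1. -/

import Mathlib

/-!
Every `m` with `1 ≤ m ≤ N` is `i * b ^ k` for exactly one pair `(i, k)` with `b ∤ i`. For a given
`i ≤ N`, the exponents `k` that occur are those with `i * b ^ k ≤ N`, and there are
`log_b ⌊N / i⌋ + 1` of them; when `N = n - 1` this number is `α i`.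
-/

open Finset

variable {b i N : ℕ}

lemma divMaxPow_mul_pow_of_not_dvd (hi : ¬ b ∣ i) (hb : b ≠ 0) (k : ℕ) :
    (i * b ^ k).divMaxPow b = i := by
  rw [mul_comm, Nat.divMaxPow_base_pow_mul hb, Nat.divMaxPow, Nat.maxPowDvdDiv_of_not_dvd hi]

lemma divMaxPow_eq_iff_exists_mul_pow_eq (hi : ¬ b ∣ i) (hb : b ≠ 0) {m : ℕ} :
    m.divMaxPow b = i ↔ ∃ k, i * b ^ k = m := by
  constructor
  · rintro rfl
    exact ⟨padicValNat b m, Nat.divMaxPow_mul_pow_padicValNat b m⟩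
  · rintro ⟨k, rfl⟩
    exact divMaxPow_mul_pow_of_not_dvd hi hb k

lemma mul_pow_le_iff_lt_log_div_add_one (hb : 1 < b) (hi : 0 < i) (hiN : i ≤ N) {k : ℕ} :
    i * b ^ k ≤ N ↔ k < Nat.log b (N / i) + 1 := by
  rw [Nat.lt_succ_iff, Nat.le_log_iff_pow_le hb (Nat.div_pos hiN hi).ne',
    Nat.le_div_iff_mul_le hi, mul_comm]

lemma log_div_add_one_eq_of_mul_pow_le_of_lt {a : ℕ} (hle : i * b ^ (a - 1) ≤ N)
    (hlt : N < i * b ^ a) :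
    Nat.log b (N / i) + 1 = a := by
  have hi : 0 < i := Nat.pos_of_mul_pos_right (Nat.zero_lt_of_lt hlt)
  obtain _ | a := a
  · exact absurd hlt hle.not_gt
  · rw [Nat.log_eq_of_pow_le_of_lt_pow]
    · rwa [Nat.le_div_iff_mul_le hi, mul_comm]
    · rwa [Nat.div_lt_iff_lt_mul hi, mul_comm]

lemma filter_divMaxPow_eq (hb : 1 < b) (hi : ¬ b ∣ i) (hi₀ : 0 < i) (hiN : i ≤ N) :
    {m ∈ Icc 1 N | m.divMaxPow b = i} =
      (range (Nat.log b (N / i) + 1)).image (fun k ↦ i * b ^ k) := by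
  have hb₀ : 0 < b := by lia
  ext m
  simp only [mem_filter, mem_Icc, mem_image, mem_range,
    divMaxPow_eq_iff_exists_mul_pow_eq hi hb₀.ne',
    ← mul_pow_le_iff_lt_log_div_add_one hb hi₀ hiN]
  constructor
  · rintro ⟨⟨-, hm⟩, k, rfl⟩
    exact ⟨k, hm, rfl⟩
  · rintro ⟨k, hm, rfl⟩
    exact ⟨⟨Nat.mul_pos hi₀ (pow_pos hb₀ k), hm⟩, k, rfl⟩

lemma card_filter_divMaxPow_eq (hb : 1 < b) (hi : ¬ b ∣ i) (hi₀ : 0 < i) (hiN : i ≤ N) :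
    #{m ∈ Icc 1 N | m.divMaxPow b = i} = Nat.log b (N / i) + 1 := by
  have hinj : Function.Injective fun k ↦ i * b ^ k :=
    (mul_right_injective₀ hi₀.ne').comp (Nat.pow_right_injective hb)
  rw [filter_divMaxPow_eq hb hi hi₀ hiN, card_image_of_injective _ hinj, card_range]

lemma divMaxPow_mem_filter_not_dvd (hb : 1 < b) {m : ℕ} (hm : m ∈ Icc 1 N) :
    m.divMaxPow b ∈ {i ∈ Icc 1 N | ¬ b ∣ i} := by
  obtain ⟨hm₁, hmN⟩ := mem_Icc.mp hm
  have hdvd : m.divMaxPow b ∣ m := Dvd.intro _ (Nat.divMaxPow_mul_pow_padicValNat b m)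
  exact mem_filter.mpr ⟨mem_Icc.mpr ⟨Nat.pos_of_dvd_of_pos hdvd hm₁,
    (Nat.le_of_dvd hm₁ hdvd).trans hmN⟩, Nat.not_dvd_divMaxPow hb (by lia)⟩

theorem sum_log_div_add_one (hb : 1 < b) (N : ℕ) :
    ∑ i ∈ Icc 1 N with ¬ b ∣ i, (Nat.log b (N / i) + 1) = N := by
  calc ∑ i ∈ Icc 1 N with ¬ b ∣ i, (Nat.log b (N / i) + 1)
      = ∑ i ∈ Icc 1 N with ¬ b ∣ i, #{m ∈ Icc 1 N | m.divMaxPow b = i} := by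
        refine sum_congr rfl fun i hi ↦ ?_
        obtain ⟨hi, hdvd⟩ := mem_filter.mp hi
        obtain ⟨hi₀, hiN⟩ := mem_Icc.mp hi
        exact (card_filter_divMaxPow_eq hb hdvd hi₀ hiN).symm
    _ = #(Icc 1 N) :=
        (card_eq_sum_card_fiberwise fun _ ↦ divMaxPow_mem_filter_not_dvd hb).symm
    _ = N := by rw [Nat.card_Icc, Nat.add_sub_cancel]

theorem sum_alpha_eq_general (hb : 1 < b) (α : ℕ → ℕ)
    (hα : ∀ i ∈ Icc 1 N, ¬ b ∣ i → i * b ^ (α i - 1) ≤ N ∧ N < i * b ^ α i) :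
    ∑ i ∈ Icc 1 N with ¬ b ∣ i, α i = N := by
  refine (sum_congr rfl fun i hi ↦ ?_).trans (sum_log_div_add_one hb N)
  obtain ⟨hi, hdvd⟩ := mem_filter.mp hi
  obtain ⟨hle, hlt⟩ := hα i hi hdvd
  exact (log_div_add_one_eq_of_mul_pow_le_of_lt hle hlt).symm

/-- let `p` be prime and `n ≥ 2` with `p ∤ n`; for each `1 ≤ i ≤ n−1`
coprime to `p`, let `α i` be the unique positive integer with
`i·p^(α i − 1) < n < i·p^(α i)`. Then `∑ α i = n − 1`. -/
theorem sum_alpha_eq (p n : ℕ) (hp : p.Prime) (hn : 2 ≤ n) (hpn : ¬ p ∣ n)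
    (α : ℕ → ℕ)
    (hα : ∀ i, 1 ≤ i → i ≤ n - 1 → Nat.Coprime i p →
      0 < α i ∧ i * p ^ (α i - 1) < n ∧ n < i * p ^ (α i)) :
    ∑ i ∈ (Finset.Icc 1 (n - 1)).filter (fun i => Nat.Coprime i p), α i = n - 1 := by
  simp only [Nat.coprime_comm (m := p), hp.coprime_iff_not_dvd] at hα ⊢
  refine sum_alpha_eq_general hp.one_lt α fun i hi hdvd ↦ ?_
  obtain ⟨hi₁, hin⟩ := mem_Icc.mp hi
  obtain ⟨-, hlt, hgt⟩ := hα i hi₁ hin hdvd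
  exact ⟨Nat.le_sub_one_of_lt hlt, by lia⟩
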